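/- arXiv:1312.3411 — 3 statements merged into one kernel-verified Lean document; each statement's English description precedes it below -/
import Mathlib

section
/- Let m = σ_n(n) and let R_n be the relative Garside element defined by Δ_n = Δ_{n−1}R_n. If U_n ∈ M satisfies: (a) x_m² does not divide U_n; (b) for every 1 ≤ i ≤ n, x_i left-divides U_n if and only if i = n; (c) there exist k ∈ {1,…,n} and a bijection τ from {1,…,n−1} onto {1,…,n}∖{k} such that x_iU_n = U_nx_{τ(i)} for all 1 ≤ i ≤ n−1; then U_n = R_n (and consequently k = m and τ = σ_n ∘ σ_{n−1}^{−1}). -/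
/-!
Conjugating through `U` gives `Δ' U = U c`, so every generator left-divides `Δ' U`; hence `Δ = Δ' R`
left-divides `Δ' U`, and cancelling `Δ'` yields `U = R V`. The point is that `V = 1`.
Comparing conjugation by `Δ'` and by `Δ` gives `xᵢ R = R x_{ρ(i)}` for `i < n`, where
`ρ = σₙ ∘ σₙ₋₁⁻¹` omits exactly the value `m = σₙ(n)`. If `V = xⱼ V'` with `j = ρ(i)`, then
`U = xᵢ R V'` is left-divisible by `xᵢ`, contrary to the hypothesis on `U`. So `j = m`; but `R` ends
in `x_m` as well, because `R ≠ 1` and an ending `R = c xⱼ` with `j = ρ(i)` would, writing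
`Δ' = d xᵢ`, give `Δ = d xᵢ R = d R xⱼ = d c xⱼ²`, against square-freeness of `Δ`. Thus `x_m²`
divides `U`, a contradiction.

That `R ≠ 1`, and that distinct indices give distinct generators (whence `τ = ρ` and `k = m`), is read
off from the homomorphisms `avoid`, which detect whether a given generator occurs in a word; they are
well defined because both sides of a defining relation involve the same two generators.
-/

/- Setting: an Artin monoid `Artin m` presented by a Coxeter matrix `m` (entries in ℕ∞),
   with divisibility notions and alternating words/products. -/

namespace RelativeGarside

/-- The alternating word `a b a b ⋯` with `k` letters in the free monoid. -/
def altWord {α : Type*} (a b : α) : ℕ → FreeMonoid α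
  | 0 => 1
  | k + 1 => FreeMonoid.of a * altWord b a k

/-- The alternating product `a * b * a * ⋯` with `k` factors in a monoid. -/
def altProd {M : Type*} [Monoid M] (a b : M) : ℕ → M
  | 0 => 1
  | k + 1 => a * altProd b a k

/-- `a` left-divides `b`. -/
def LeftDvd {M : Type*} [Monoid M] (a b : M) : Prop := ∃ c, b = a * c

/-- `a` right-divides `b`. -/
def RightDvd {M : Type*} [Monoid M] (a b : M) : Prop := ∃ c, b = c * a

/-- `a` divides `b` (two-sidedly). -/
def Dvd2 {M : Type*} [Monoid M] (a b : M) : Prop := ∃ l r, b = l * a * r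

/-- `d` is the least common left multiple of the set `X`. -/
def IsLeftLcm {M : Type*} [Monoid M] (X : Set M) (d : M) : Prop :=
  (∀ a ∈ X, LeftDvd a d) ∧ ∀ w, (∀ a ∈ X, LeftDvd a w) → LeftDvd d w

/-- The defining relations of the Artin monoid of the Coxeter matrix `m`:
`iji⋯ = jij⋯` (`k` factors on both sides) whenever `i ≠ j` and `m i j = k < ∞`. -/
def artinRels {α : Type*} (m : α → α → ℕ∞) : FreeMonoid α → FreeMonoid α → Prop :=
  fun u v => ∃ i j : α, i ≠ j ∧ ∃ k : ℕ, m i j = (k : ℕ∞) ∧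
    u = altWord i j k ∧ v = altWord j i k

/-- The Artin monoid of the Coxeter matrix `m`. -/
abbrev Artin {α : Type*} (m : α → α → ℕ∞) := PresentedMonoid (artinRels m)

theorem map_altWord {α N : Type*} [Monoid N] (f : FreeMonoid α →* N) (a b : α) (k : ℕ) :
    f (altWord a b k) = altProd (f (FreeMonoid.of a)) (f (FreeMonoid.of b)) k := by
  induction k generalizing a b with
  | zero => simp [altWord, altProd]
  | succ k ih => simp [altWord, altProd, ih]

/-- In a commutative monoid, alternating products of idempotents are symmetric as soon as both
letters occur. -/
theorem altProd_comm_of_idem {N : Type*} [CommMonoid N] {a b : N} (ha : a * a = a)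
    (hb : b * b = b) {k : ℕ} (hk : 2 ≤ k) : altProd a b k = altProd b a k := by
  have key : ∀ j : ℕ, ∀ a b : N, a * a = a → b * b = b → altProd a b (j + 2) = a * b := by
    intro j
    induction j with
    | zero => intro a b _ _; simp [altProd]
    | succ j ih =>
      intro a b ha hb
      rw [altProd, ih b a hb ha, mul_comm b a, ← mul_assoc, ha]
  obtain ⟨j, rfl⟩ := Nat.exists_eq_add_of_le' hk
  rw [key j a b ha hb, key j b a hb ha, mul_comm]

/-- The homomorphism to `(ℕ, ·)` sending the generator `s` to `0` and all other generators to `1`: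
its value is `0` on elements in which `s` occurs, and `1` on all others. -/
def avoid {α : Type*} [DecidableEq α] (m : α → α → ℕ∞) (hoff : ∀ i j, i ≠ j → 2 ≤ m i j) (s : α) :
    Artin m →* ℕ :=
  PresentedMonoid.lift (fun i => if i = s then 0 else 1) (by
    rintro u v ⟨i, j, hij, k, hk, rfl, rfl⟩
    have h2 : 2 ≤ k := by
      have := hoff i j hij
      rw [hk] at this
      exact_mod_cast this
    rw [map_altWord, map_altWord]
    apply altProd_comm_of_idem _ _ h2 <;> simp)

theorem avoid_of {α : Type*} [DecidableEq α] (m : α → α → ℕ∞) (hoff : ∀ i j, i ≠ j → 2 ≤ m i j)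
    (s i : α) : avoid m hoff s (PresentedMonoid.of (artinRels m) i) = if i = s then 0 else 1 := rfl

/-- The mirror image, for right divisors, of the existence of a generator left-dividing any
non-identity element; it holds because the generators generate. -/
theorem eq_one_or_exists_mul_of {α : Type*} (m : α → α → ℕ∞) (w : Artin m) :
    w = 1 ∨ ∃ c i, w = c * PresentedMonoid.of (artinRels m) i := by
  have hw : w ∈ Submonoid.closure (Set.range (PresentedMonoid.of (artinRels m))) := by
    rw [PresentedMonoid.closure_range_of]; trivial
  induction hw using Submonoid.closure_induction_right with
  | one => exact Or.inl rfl
  | mul_right c _ y hy _ =>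
    obtain ⟨i, rfl⟩ := hy
    exact Or.inr ⟨c, i, rfl⟩

/-- **Proposition 2**: if `U` is not divisible by `x_m²` (`m = σₙ(n)`), is left-divisible by
`xᵢ` exactly when `i = n`, and conjugates the generators `x₁,…,xₙ₋₁` via a bijection `τ`
onto the complement of some `x_k`, then `U = R` (and `k = m`, `τ = σₙ ∘ σₙ₋₁⁻¹`). -/
theorem statement2
    (n : ℕ) (m : Fin (n + 1) → Fin (n + 1) → ℕ∞)
    -- Coxeter matrix conditions
    (hdiag : ∀ i, m i i = 1) (hsymm : ∀ i j, m i j = m j i)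
    (hoff : ∀ i j : Fin (n + 1), i ≠ j → 2 ≤ m i j)
    -- the generators of the Artin monoid `M(Γₙ)`
    (x : Fin (n + 1) → Artin m) (hx : ∀ i, x i = PresentedMonoid.of (artinRels m) i)
    -- (i) cancellativity
    (hcancl : ∀ a b c : Artin m, a * b = a * c → b = c)
    (hcancr : ∀ a b c : Artin m, b * a = c * a → b = c)
    -- (ii) the Garside element of `Γₙ₋₁`
    (Δ' : Artin m)
    (hΔ'mem : Δ' ∈ Submonoid.closure (Set.range fun i : Fin n => x i.castSucc))
    (hΔ'lcm : IsLeftLcm (Set.range fun i : Fin n => x i.castSucc) Δ')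
    (hΔ'right : ∀ i : Fin n, RightDvd (x i.castSucc) Δ')
    -- (iii) the Garside element of `Γₙ`
    (Δ : Artin m) (hΔlcm : IsLeftLcm (Set.range x) Δ)
    (hΔsf : ∀ i : Fin (n + 1), ¬ Dvd2 (x i * x i) Δ)
    -- (iv) the bijections `σₙ₋₁` and `σₙ`
    (σ' : Equiv.Perm (Fin n))
    (hσ' : ∀ i : Fin n, x i.castSucc * Δ' = Δ' * x (σ' i).castSucc)
    (σ : Equiv.Perm (Fin (n + 1))) (hσ : ∀ i, x i * Δ = Δ * x (σ i))
    -- (v) every non-identity element is left-divisible by a generator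
    (hgen : ∀ w : Artin m, w ≠ 1 → ∃ i, LeftDvd (x i) w)
    -- (vi) Garside's Lemma
    (hGar : ∀ (W : Artin m) (i j : Fin (n + 1)), i ≠ j →
      LeftDvd (x i) W → LeftDvd (x j) W →
      ∃ k : ℕ, m i j = (k : ℕ∞) ∧ LeftDvd (altProd (x i) (x j) k) W)
    -- the relative Garside element
    (R : Artin m) (hR : Δ = Δ' * R)
    (U : Artin m)
    -- (a) `x_m²` does not divide `U`
    (hUsf : ¬ Dvd2 (x (σ (Fin.last n)) * x (σ (Fin.last n))) U)
    -- (b) `xᵢ` left-divides `U` iff `i = n`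
    (hUleft : ∀ i : Fin (n + 1), (LeftDvd (x i) U ↔ i = Fin.last n))
    -- (c) a bijection `τ : {1,…,n−1} → {1,…,n} ∖ {k}` with `xᵢ U = U x_{τ(i)}`
    (k : Fin (n + 1)) (τ : Fin n → Fin (n + 1))
    (hτinj : Function.Injective τ) (hτrange : Set.range τ = {k}ᶜ)
    (hτ : ∀ i : Fin n, x i.castSucc * U = U * x (τ i)) :
    U = R ∧ k = σ (Fin.last n) ∧ ∀ i : Fin n, τ i = σ ((σ'.symm i).castSucc) := by
  have hxinj : Function.Injective x := by
    intro i j hij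
    by_contra hne
    have := congrArg (avoid m hoff j) hij
    rw [hx, hx, avoid_of, avoid_of] at this
    simp [hne] at this
  have hΔ'avoid : avoid m hoff (Fin.last n) Δ' = 1 := by
    clear hΔ'lcm hΔ'right hσ' hR
    induction hΔ'mem using Submonoid.closure_induction with
    | mem y hy =>
      obtain ⟨i, rfl⟩ := hy
      simp [hx, avoid_of, (Fin.castSucc_lt_last i).ne]
    | one => simp
    | mul a b _ _ ha hb => rw [map_mul, ha, hb]
  -- Unlike `Δ'`, the element `Δ` involves the last generator.
  have hR1 : R ≠ 1 := by
    rintro rfl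
    obtain ⟨c, hc⟩ := hΔlcm.1 (x (Fin.last n)) ⟨_, rfl⟩
    rw [hR, mul_one] at hc
    rw [hc, map_mul, hx, avoid_of] at hΔ'avoid
    simp at hΔ'avoid
  have hcomm : ∀ i : Fin n, x i.castSucc * R = R * x (σ (σ'.symm i).castSucc) := by
    intro i
    apply hcancl Δ'
    have h1 := hσ (σ'.symm i).castSucc
    have h2 := hσ' (σ'.symm i)
    rw [Equiv.apply_symm_apply] at h2
    rw [← mul_assoc, ← h2, mul_assoc, ← hR, h1, hR, mul_assoc]
  have hcase : ∀ j, j = σ (Fin.last n) ∨ ∃ i : Fin n, j = σ (σ'.symm i).castSucc := by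
    intro j
    rcases Fin.eq_castSucc_or_eq_last (σ.symm j) with ⟨i, hi⟩ | hi
    · exact Or.inr ⟨σ' i, by rw [Equiv.symm_apply_apply, ← hi, Equiv.apply_symm_apply]⟩
    · exact Or.inl (by rw [← hi, Equiv.apply_symm_apply])
  -- If `R` ended in another generator, pulling it back through `R` would make a square divide `Δ`.
  have hRend : ∃ c, R = c * x (σ (Fin.last n)) := by
    obtain h | ⟨c, j, hc⟩ := eq_one_or_exists_mul_of m R
    · exact absurd h hR1
    rw [← hx] at hc
    rcases hcase j with rfl | ⟨i, rfl⟩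
    · exact ⟨c, hc⟩
    · obtain ⟨d, hd⟩ := hΔ'right i
      refine absurd ⟨d * c, 1, ?_⟩ (hΔsf (σ (σ'.symm i).castSucc))
      rw [hR, hd, mul_assoc, hcomm, hc]
      simp only [mul_assoc, mul_one]
  have hconj : ∃ c, Δ' * U = U * c := by
    clear hΔ'avoid hΔ'lcm hΔ'right hσ' hR
    induction hΔ'mem using Submonoid.closure_induction with
    | mem y hy =>
      obtain ⟨i, rfl⟩ := hy
      exact ⟨_, hτ i⟩
    | one => exact ⟨1, by simp⟩
    | mul a b _ _ ha hb =>
      obtain ⟨c, hc⟩ := ha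
      obtain ⟨d, hd⟩ := hb
      exact ⟨c * d, by rw [mul_assoc, hd, ← mul_assoc, hc, mul_assoc]⟩
  have hdvd : LeftDvd Δ (Δ' * U) := by
    apply hΔlcm.2
    rintro _ ⟨i, rfl⟩
    rcases Fin.eq_castSucc_or_eq_last i with ⟨i, rfl⟩ | rfl
    · obtain ⟨d, hd⟩ := hΔ'lcm.1 _ ⟨i, rfl⟩
      exact ⟨d * U, by rw [hd, mul_assoc]⟩
    · obtain ⟨c, hc⟩ := hconj
      obtain ⟨d, hd⟩ := (hUleft (Fin.last n)).2 rfl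
      exact ⟨d * c, by rw [hc, ← mul_assoc, ← hd]⟩
  obtain ⟨V, hV⟩ := hdvd
  rw [hR, mul_assoc] at hV
  replace hV := hcancl _ _ _ hV
  have hV1 : V = 1 := by
    by_contra hne
    obtain ⟨j, V', rfl⟩ := hgen V hne
    rcases hcase j with rfl | ⟨i, rfl⟩
    · obtain ⟨c, hc⟩ := hRend
      exact hUsf ⟨c, V', by rw [hV, hc]; simp only [mul_assoc]⟩
    · rw [← mul_assoc, ← hcomm, mul_assoc] at hV
      exact (Fin.castSucc_lt_last i).ne ((hUleft _).1 ⟨_, hV⟩)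
  have hUR : U = R := by rw [hV, hV1, mul_one]
  have hτeq : ∀ i : Fin n, τ i = σ ((σ'.symm i).castSucc) := by
    intro i
    apply hxinj
    apply hcancl R
    rw [← hcomm i, ← hUR, hτ i]
  refine ⟨hUR, ?_, hτeq⟩
  rcases hcase k with h | ⟨i, hi⟩
  · exact h
  · have : k ∈ Set.range τ := ⟨i, by rw [hτeq, hi]⟩
    rw [hτrange] at this
    exact absurd rfl this

end RelativeGarside
end

section
/- In the Artin monoid of type B_n (n ≥ 2), let N_n = x_nx_{n−1}⋯x_2x_1x_2⋯x_{n−1}x_n. Then: (a) N_n is square-free; (b) for every 1 ≤ i ≤ n, x_i left-divides N_n if and only if i = n; (c) x_iN_n = N_nx_i for every 1 ≤ i ≤ n−1. -/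
/-!
Parts (a) and (b) hold because the word `w = xₙ⋯x₂x₁x₂⋯xₙ` is rigid: neither side of any defining
relation occurs in it as a factor. Consecutive letters of `w` have indices differing by exactly one,
which excludes the commutations; the only factor `xᵢxⱼxᵢ` of `w` is `x₂x₁x₂`, which is no side of
a braid relation of length three and does not extend inside `w` to an alternating word of length
four. Hence the congruence class of `w` is `{w}` (`eq_of_mk_eq`), so divisors of `Nₙ` can be read
off as factors of `w`. That no relator occurs in `w` is turned into a statement about the class by
way of the syntactic congruence of `{w}`, which contains the defining relations.

Part (c) is an induction on `k` for the blocks `N_{k+1} = x_{k+1} N_k x_{k+1}`, using that `N_k`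
commutes with `x_j` for `j ≥ k + 2`.
-/

namespace ArtinB

/-- The relations of type `Bₙ` on `n` generators `x₁,…,xₙ` (indexed by `Fin n`, index `i`
corresponding to `x_{i+1}`): `x₁x₂x₁x₂ = x₂x₁x₂x₁`; `xᵢx_{i+1}xᵢ = x_{i+1}xᵢx_{i+1}` for
`2 ≤ i ≤ n−1`; `xᵢxⱼ = xⱼxᵢ` for `|i−j| ≥ 2`. -/
def rels (n : ℕ) : FreeMonoid (Fin n) → FreeMonoid (Fin n) → Prop := fun u v =>
  (∃ i j : Fin n, (i : ℕ) = 0 ∧ (j : ℕ) = 1 ∧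
    u = .of i * .of j * .of i * .of j ∧ v = .of j * .of i * .of j * .of i) ∨
  (∃ i j : Fin n, 1 ≤ (i : ℕ) ∧ (i : ℕ) + 1 = (j : ℕ) ∧
    u = .of i * .of j * .of i ∧ v = .of j * .of i * .of j) ∨
  (∃ i j : Fin n, (i : ℕ) + 2 ≤ (j : ℕ) ∧ u = .of i * .of j ∧ v = .of j * .of i)

/-- The Artin monoid of type `Bₙ`. -/
abbrev M (n : ℕ) := PresentedMonoid (rels n)

/-- The generator `x_{i+1}`. -/
def x {n : ℕ} (i : Fin n) : M n := PresentedMonoid.of (rels n) i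

/-- The generator `x_{i+1}` as a function of a natural number (`1` out of range). -/
def X (n : ℕ) (i : ℕ) : M n := if h : i < n then x ⟨i, h⟩ else 1

/-- `a` left-divides `b`. -/
def LeftDvd {P : Type*} [Monoid P] (a b : P) : Prop := ∃ c, b = a * c

/-- `a` divides `b` (two-sidedly). -/
def Dvd2 {P : Type*} [Monoid P] (a b : P) : Prop := ∃ l r, b = l * a * r

/-- `d` is the least common left multiple of the set `S`. -/
def IsLeftLcm {P : Type*} [Monoid P] (S : Set P) (d : P) : Prop :=
  (∀ a ∈ S, LeftDvd a d) ∧ ∀ w, (∀ a ∈ S, LeftDvd a w) → LeftDvd d w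

/-- The block `x_{k+1}x_k⋯x₂x₁x₂⋯x_kx_{k+1}`
(with `0`-based indices, `x k * ⋯ * x 1 * x 0 * x 1 * ⋯ * x k`). -/
def block (n k : ℕ) : M n :=
  (((List.range (k + 1)).reverse).map (X n)).prod *
    (((List.range (k + 1)).drop 1).map (X n)).prod

/-- The element `Nₙ = xₙx_{n−1}⋯x₂x₁x₂⋯x_{n−1}xₙ`. -/
def Nword (n : ℕ) : M n := block n (n - 1)

/-- The syntactic congruence of the singleton `{w}`. -/
def synCon {A : Type*} (w : FreeMonoid A) : Con (FreeMonoid A) where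
  r u v := ∀ l r, l * u * r = w ↔ l * v * r = w
  iseqv := ⟨fun _ _ _ => Iff.rfl, fun h l r => (h l r).symm,
    fun h h' l r => (h l r).trans (h' l r)⟩
  mul' := by
    intro a b c d h h' l r
    have h1 := h l (c * r)
    have h2 := h' (l * b) r
    simp only [mul_assoc] at h1 h2 ⊢
    exact h1.trans h2

/-- The indices of the letters of `Nₙ`, from left to right. -/
def idx (n : ℕ) : List ℕ := (List.range n).reverse ++ (List.range n).drop 1

theorem idx_getElem? (n k a : ℕ) (h : (idx n)[k]? = some a) :
    (k < n ∧ a + k + 1 = n) ∨ (n ≤ k ∧ a + n = k + 1 ∧ a < n) := by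
  unfold idx at h
  rw [List.getElem?_append] at h
  split_ifs at h with hk
  · simp only [List.length_reverse, List.length_range] at hk
    rw [List.getElem?_reverse (by simpa using hk)] at h
    simp only [List.length_range] at h
    rw [List.getElem?_eq_some_iff] at h
    obtain ⟨h1, h2⟩ := h
    simp only [List.getElem_range] at h2
    omega
  · simp only [List.length_reverse, List.length_range] at hk h
    rw [List.getElem?_drop, List.getElem?_eq_some_iff] at h
    obtain ⟨h1, h2⟩ := h
    simp only [List.getElem_range, List.length_range] at h1 h2
    omega

theorem idx_lt (n a : ℕ) (h : a ∈ idx n) : a < n := by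
  obtain ⟨k, hk⟩ := List.mem_iff_getElem?.1 h
  have := idx_getElem? n k a hk
  omega

theorem exists_word (n : ℕ) : ∃ w : List (Fin n), w.map Fin.val = idx n :=
  ⟨(idx n).pmap Fin.mk (idx_lt n), by simp [List.map_pmap]⟩

theorem mk_ofList {n : ℕ} (w : List (Fin n)) :
    PresentedMonoid.mk (rels n) (FreeMonoid.ofList w) = ((w.map Fin.val).map (X n)).prod := by
  induction w with
  | nil => rfl
  | cons a w ih =>
    rw [FreeMonoid.ofList_cons, map_mul, ih]
    simp [X, x, PresentedMonoid.of]

theorem Nword_eq {n : ℕ} (hn : 2 ≤ n) {w : List (Fin n)} (hw : w.map Fin.val = idx n) :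
    Nword n = PresentedMonoid.mk (rels n) (FreeMonoid.ofList w) := by
  rw [mk_ofList, hw, Nword, block, idx, Nat.sub_add_cancel (by omega), List.map_append,
    List.prod_append]

theorem factor_getElem? {n : ℕ} {w : List (Fin n)} (hw : w.map Fin.val = idx n)
    {l u r : FreeMonoid (Fin n)} (h : l * u * r = FreeMonoid.ofList w) (k : ℕ)
    (hk : k < u.toList.length) :
    (idx n)[l.toList.length + k]? = some (u.toList[k] : ℕ) := by
  have h' : l.toList ++ u.toList ++ r.toList = w := by
    have := congrArg FreeMonoid.toList h
    simpa using this
  rw [← hw, ← h', List.map_append, List.map_append, List.append_assoc,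
    List.getElem?_append_right (by simp), List.getElem?_append_left (by simpa using hk)]
  simp [hk]

/-- Consecutive letters of the word of `Nₙ` have indices differing by exactly one. -/
theorem no_factor_two {n : ℕ} {w : List (Fin n)} (hw : w.map Fin.val = idx n)
    (i j : Fin n) (hij : (i : ℕ) + 1 ≠ j) (hji : (j : ℕ) + 1 ≠ i) (l r : FreeMonoid (Fin n)) :
    l * (.of i * .of j) * r ≠ FreeMonoid.ofList w := by
  intro h
  have h0 := idx_getElem? _ _ _ (factor_getElem? hw h 0 (by simp))
  have h1 := idx_getElem? _ _ _ (factor_getElem? hw h 1 (by simp))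
  simp at h0 h1
  omega

/-- The only factor `xᵢxⱼxᵢ` of the word of `Nₙ` is its middle part `x₂x₁x₂`. -/
theorem no_factor_three {n : ℕ} {w : List (Fin n)} (hw : w.map Fin.val = idx n)
    (i j : Fin n) (hj : (j : ℕ) ≠ 0) (l r : FreeMonoid (Fin n)) :
    l * (.of i * .of j * .of i) * r ≠ FreeMonoid.ofList w := by
  intro h
  have h0 := idx_getElem? _ _ _ (factor_getElem? hw h 0 (by simp))
  have h1 := idx_getElem? _ _ _ (factor_getElem? hw h 1 (by simp))
  have h2 := idx_getElem? _ _ _ (factor_getElem? hw h 2 (by simp))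
  simp at h0 h1 h2
  omega

/-- The word of `Nₙ` is the only word representing `Nₙ`. -/
theorem eq_of_mk_eq {n : ℕ} {w : List (Fin n)} (hw : w.map Fin.val = idx n)
    (u : FreeMonoid (Fin n))
    (h : PresentedMonoid.mk (rels n) u = PresentedMonoid.mk (rels n) (FreeMonoid.ofList w)) :
    u = FreeMonoid.ofList w := by
  have hle : conGen (rels n) ≤ synCon (FreeMonoid.ofList w) := by
    refine Con.conGen_le.2 ?_
    rintro u v (⟨i, j, hi, hj, rfl, rfl⟩ | ⟨i, j, hi, hj, rfl, rfl⟩ | ⟨i, j, hij, rfl, rfl⟩) l r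
    -- Both sides of the relation of length four contain `x₁x₂x₁`.
    · refine iff_of_false (fun h => no_factor_three hw i j (by omega) l (.of j * r) ?_)
        (fun h => no_factor_three hw i j (by omega) (l * .of j) r ?_)
      · simpa only [mul_assoc] using h
      · simpa only [mul_assoc] using h
    · exact iff_of_false (no_factor_three hw i j (by omega) l r)
        (no_factor_three hw j i (by omega) l r)
    · exact iff_of_false (no_factor_two hw i j (by omega) (by omega) l r)
        (no_factor_two hw j i (by omega) (by omega) l r)
  have h1 : conGen (rels n) u (FreeMonoid.ofList w) := (Con.eq _).1 h
  have h2 := hle h1 1 1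
  simpa using h2

theorem X_comm {n i j : ℕ} (h : i + 2 ≤ j) : Commute (X n i) (X n j) := by
  unfold X
  split_ifs with hi hj
  · exact PresentedMonoid.mk_eq_mk_of_rel (Or.inr (Or.inr ⟨⟨i, hi⟩, ⟨j, hj⟩, h, rfl, rfl⟩))
  all_goals simp

theorem X_braid {n i : ℕ} (h1 : 1 ≤ i) (h : i + 1 < n) :
    X n i * X n (i + 1) * X n i = X n (i + 1) * X n i * X n (i + 1) := by
  rw [X, X, dif_pos h, dif_pos (by omega)]
  exact PresentedMonoid.mk_eq_mk_of_rel (Or.inr (Or.inl ⟨⟨i, by omega⟩, ⟨i + 1, h⟩, h1, rfl, rfl, rfl⟩))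

theorem X_braid_four {n : ℕ} (h : 1 < n) :
    X n 0 * X n 1 * X n 0 * X n 1 = X n 1 * X n 0 * X n 1 * X n 0 := by
  rw [X, X, dif_pos h, dif_pos (by omega)]
  exact PresentedMonoid.mk_eq_mk_of_rel (Or.inl ⟨⟨0, by omega⟩, ⟨1, h⟩, rfl, rfl, rfl, rfl⟩)

theorem block_zero (n : ℕ) : block n 0 = X n 0 := by simp [block]

theorem block_succ (n k : ℕ) : block n (k + 1) = X n (k + 1) * block n k * X n (k + 1) := by
  unfold block
  rw [List.range_succ (n := k + 1), List.drop_append_of_le_length (by simp)]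
  simp [mul_assoc]

theorem block_comm_far {n k j : ℕ} (h : k + 2 ≤ j) : Commute (block n k) (X n j) := by
  induction k with
  | zero => rw [block_zero]; exact X_comm h
  | succ k ih =>
    rw [block_succ]
    exact ((X_comm h).mul_left (ih (by omega))).mul_left (X_comm h)

theorem block_comm {n k i : ℕ} (hk : k < n) (h : i < k) : Commute (X n i) (block n k) := by
  induction k with
  | zero => omega
  | succ k ih =>
    rw [block_succ]
    rcases Nat.lt_succ_iff_lt_or_eq.1 h with h | rfl
    · have hc : Commute (X n i) (X n (k + 1)) := X_comm (by omega)
      exact (hc.mul_right (ih (by omega) h)).mul_right hc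
    · cases i with
      | zero =>
        rw [block_zero]
        have := X_braid_four hk
        simpa only [Commute, SemiconjBy, mul_assoc] using this
      | succ m =>
        rw [block_succ]
        have hb := X_braid (n := n) (i := m + 1) (by omega) hk
        have hB : block n m * X n (m + 2) = X n (m + 2) * block n m :=
          block_comm_far (by omega)
        change X n (m + 1) * (X n (m + 2) * _ * X n (m + 2)) =
          X n (m + 2) * _ * X n (m + 2) * X n (m + 1)
        change X n (m + 1) * X n (m + 2) * X n (m + 1) =
          X n (m + 2) * X n (m + 1) * X n (m + 2) at hb
        generalize X n (m + 1) = a at *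
        generalize X n (m + 2) = b at *
        generalize block n m = B at *
        calc a * (b * (a * B * a) * b) = (a * b * a) * B * a * b := by simp only [mul_assoc]
          _ = b * a * (b * B) * a * b := by rw [hb]; simp only [mul_assoc]
          _ = b * a * B * (b * a * b) := by rw [← hB]; simp only [mul_assoc]
          _ = b * (a * B * a) * b * a := by rw [← hb]; simp only [mul_assoc]

/-- In type `Bₙ` (`n ≥ 2`), for `Nₙ = xₙx_{n−1}⋯x₂x₁x₂⋯x_{n−1}xₙ`: (a) `Nₙ` is square
free; (b) `xᵢ` left-divides `Nₙ` iff `i = n`; (c) `xᵢNₙ = Nₙxᵢ` for `1 ≤ i ≤ n−1`. -/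
theorem statement9 (n : ℕ) (hn : 2 ≤ n) :
    (∀ i : Fin n, ¬ Dvd2 (x i * x i) (Nword n)) ∧
    (∀ i : Fin n, (LeftDvd (x i) (Nword n) ↔ (i : ℕ) + 1 = n)) ∧
    (∀ i : Fin n, (i : ℕ) + 2 ≤ n → x i * Nword n = Nword n * x i) := by
  obtain ⟨w, hw⟩ := exists_word n
  have hN := Nword_eq hn hw
  refine ⟨?_, ?_, ?_⟩
  · rintro i ⟨l, r, h⟩
    obtain ⟨l, rfl⟩ := PresentedMonoid.surjective_mk (rels := rels n) l
    obtain ⟨r, rfl⟩ := PresentedMonoid.surjective_mk (rels := rels n) r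
    refine no_factor_two hw i i (by omega) (by omega) l r (eq_of_mk_eq hw _ ?_)
    rw [← hN, h]
    simp [x, PresentedMonoid.of]
  · intro i
    constructor
    · rintro ⟨r, h⟩
      obtain ⟨r, rfl⟩ := PresentedMonoid.surjective_mk (rels := rels n) r
      have h1 : 1 * .of i * r = FreeMonoid.ofList w := eq_of_mk_eq hw _ (by
        rw [← hN, h]
        simp [x, PresentedMonoid.of])
      have h0 := idx_getElem? _ _ _ (factor_getElem? hw h1 0 (by simp))
      simp at h0
      omega
    · intro hi
      obtain ⟨m, rfl⟩ : ∃ m, n = m + 2 := ⟨n - 2, by omega⟩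
      have hx : X (m + 2) (m + 1) = x i := by
        rw [X, dif_pos (by omega)]
        congr 1
        ext
        simp only
        omega
      exact ⟨block (m + 2) m * X (m + 2) (m + 1), by
        rw [← hx, ← mul_assoc]
        exact block_succ _ _⟩
  · intro i hi
    have hx : X n i = x i := by simp [X]
    rw [← hx]
    exact block_comm (by omega) (by omega)

end ArtinB
end

section
/- In the Artin monoid of type D_n with n ≥ 4 even, let P_n = ∏_{k=1}^{n−1} (y_k x_{n−2}x_{n−3}⋯x_k), where y_k = x_n for k odd and y_k = x_{n−1} for k even, and the k-th block is y_k followed by the descending product x_{n−2}x_{n−3}⋯x_k (empty descending part when k > n−2). Then: (a) P_n is square-free and x_nx_{n−1} does not divide P_n; (b) for every 1 ≤ i ≤ n, x_i left-divides P_n if and only if i = n; (c) x_iP_n = P_nx_{n−i} for every 1 ≤ i ≤ n−1. -/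
/-!
Part (c) is a computation with braid relations. Write `Bₖ = block n k`, and let `yₖ = lead n k` be
its first letter, alternately one of the two fork generators `X (n-1)`, `X (n-2)`. Passing through
`Bₖ` from left to right, a chain generator `X i` with `k ≤ i ≤ n - 4` becomes `X (i + 1)`
(`block_shift`), and `X (n - 3)` becomes `yₖ` (`block_fork`). The generator `yₖ₊₁` becomes `X k`
after passing through `Bₖ Bₖ₊₁` (`two_blocks`), and this `X k` commutes with all later blocks
(`block_comm`). Since `yₖ = yₖ₊₂`, chaining these gives `X (n-2-j) * P n = P n * X j` (`P_conj`);
the evenness of `n` only matters for `j = n - 2`, where it decides the parity of the last block.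

Parts (a) and (b) follow from the spin representation (the sum of the two half-spin ones), whose
weights are sign vectors of length `n`. Each generator acts on the weights as a partial map: it
either moves a weight to another one or annihilates it. These partial maps satisfy the defining
relations (`step_braid`, `step_comm`; both sides of every braid relation annihilate everything),
so the monoid acts. The element `P n` moves the all-plus vector to the all-minus vector, hence no
factor of `P n` may annihilate every weight (`not_dvd2_P`). But `X i * X i` and `X (n-1) * X
(n-2)` do (`move_move_same`). Likewise the only generator that does not annihilate the all-plus
vector is `X (n-1)`, so no other generator left-divides `P n`.
-/

namespace ArtinD

/-- The edges of the Coxeter graph `Dₙ` on `0`-based indices (index `i` corresponds to the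
generator `x_{i+1}`): the chain `x₁ − x₂ − ⋯ − x_{n−1}` and the branch `x_{n−2} − xₙ`. -/
def IsEdge (n i j : ℕ) : Prop := (i + 1 = j ∧ j + 2 ≤ n) ∨ (i + 3 = n ∧ j + 1 = n)

/-- The relations of type `Dₙ` (`n ≥ 4`): `xᵢx_{i+1}xᵢ = x_{i+1}xᵢx_{i+1}` for
`1 ≤ i ≤ n−2`; `x_{n−2}xₙx_{n−2} = xₙx_{n−2}xₙ`; `xᵢxⱼ = xⱼxᵢ` for all other pairs
`i < j` (in particular `x_{n−1}xₙ = xₙx_{n−1}`). -/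
def rels (n : ℕ) : FreeMonoid (Fin n) → FreeMonoid (Fin n) → Prop := fun u v =>
  (∃ i j : Fin n, IsEdge n i j ∧
    u = .of i * .of j * .of i ∧ v = .of j * .of i * .of j) ∨
  (∃ i j : Fin n, i < j ∧ ¬ IsEdge n i j ∧ u = .of i * .of j ∧ v = .of j * .of i)

/-- The Artin monoid of type `Dₙ`. -/
abbrev M (n : ℕ) := PresentedMonoid (rels n)

/-- The generator `x_{i+1}`. -/
def x {n : ℕ} (i : Fin n) : M n := PresentedMonoid.of (rels n) i

/-- The generator `x_{i+1}` as a function of a natural number (`1` out of range). -/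
def X (n : ℕ) (i : ℕ) : M n := if h : i < n then x ⟨i, h⟩ else 1

/-- `a` left-divides `b`. -/
def LeftDvd {P : Type*} [Monoid P] (a b : P) : Prop := ∃ c, b = a * c

/-- `a` divides `b` (two-sidedly). -/
def Dvd2 {P : Type*} [Monoid P] (a b : P) : Prop := ∃ l r, b = l * a * r

/-- `d` is the least common left multiple of the set `S`. -/
def IsLeftLcm {P : Type*} [Monoid P] (S : Set P) (d : P) : Prop :=
  (∀ a ∈ S, LeftDvd a d) ∧ ∀ w, (∀ a ∈ S, LeftDvd a w) → LeftDvd d w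

/-- The `k`-th block `y_k x_{n−2}x_{n−3}⋯x_k` of `Pₙ` (here the `1`-based block index `k`
of the paper is the `0`-based `k + 1`): `y_k = xₙ` for `k` odd, `y_k = x_{n−1}` for `k`
even, followed by the descending product `x_{n−2}x_{n−3}⋯x_k` (empty when `k > n−2`). -/
def block (n k : ℕ) : M n :=
  (if k % 2 = 0 then X n (n - 1) else X n (n - 2)) *
    ((((List.range (n - 2)).drop k).reverse).map (X n)).prod

/-- The element `Pₙ = ∏_{k=1}^{n−1} (y_k x_{n−2}x_{n−3}⋯x_k)`. -/
def P (n : ℕ) : M n := ((List.range (n - 1)).map (block n)).prod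

/-! ### Conjugating generators through the blocks -/

theorem X_comm {n i j : ℕ} (hij : i < j) (hj : j < n) (h : ¬ IsEdge n i j) :
    Commute (X n i) (X n j) := by
  have hi : i < n := hij.trans hj
  simp only [X, hi, hj, dif_pos, x]
  exact PresentedMonoid.mk_eq_mk_of_rel
    (Or.inr ⟨⟨i, hi⟩, ⟨j, hj⟩, hij, h, rfl, rfl⟩)

theorem X_braid {n i j : ℕ} (hi : i < n) (hj : j < n) (h : IsEdge n i j) :
    X n i * X n j * X n i = X n j * X n i * X n j := by
  simp only [X, hi, hj, dif_pos, x]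
  exact PresentedMonoid.mk_eq_mk_of_rel
    (Or.inl ⟨⟨i, hi⟩, ⟨j, hj⟩, h, rfl, rfl⟩)

/-- The descending product `X (b-1) * ⋯ * X a`, equal to `1` when `b ≤ a`. -/
def desc (n a b : ℕ) : M n := ((((List.range b).drop a).reverse).map (X n)).prod

theorem desc_eq_one {n a b : ℕ} (h : b ≤ a) : desc n a b = 1 := by
  simp [desc, List.drop_eq_nil_of_le, h]

theorem desc_top {n a b : ℕ} (h : a ≤ b) : desc n a (b + 1) = X n b * desc n a b := by
  simp [desc, List.range_succ, List.drop_append_of_le_length, h]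

theorem desc_bot {n a b : ℕ} (h : a < b) : desc n a b = desc n (a + 1) b * X n a := by
  unfold desc
  rw [List.drop_eq_getElem_cons (by simpa using h)]
  simp

theorem commute_desc {n a b : ℕ} {g : M n} (h : ∀ m, a ≤ m → m < b → Commute g (X n m)) :
    Commute g (desc n a b) := by
  induction b with
  | zero => simp [desc_eq_one]
  | succ b ih =>
    rcases le_or_gt a b with hab | hab
    · rw [desc_top hab]
      exact (h b hab (by omega)).mul_right (ih fun m h1 h2 => h m h1 (by omega))
    · rw [desc_eq_one hab]; exact Commute.one_right g

/-- Conjugation by a descending product along the chain shifts generators by one. -/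
theorem desc_shift {n a b i : ℕ} (hai : a ≤ i) (hib : i + 2 ≤ b) (hb : b + 1 ≤ n) :
    SemiconjBy (desc n a b) (X n (i + 1)) (X n i) := by
  induction b, hib using Nat.le_induction with
  | base =>
    have hc : Commute (X n (i + 1)) (desc n a i) := commute_desc fun m _ h2 =>
      (X_comm (by omega) (by omega) (by unfold IsEdge; omega)).symm
    have hb := X_braid (n := n) (i := i) (j := i + 1) (by omega) (by omega)
      (by unfold IsEdge; omega)
    rw [desc_top (b := i + 1) (by omega), desc_top hai]
    change X n (i + 1) * (X n i * desc n a i) * X n (i + 1)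
      = X n i * (X n (i + 1) * (X n i * desc n a i))
    simp only [← mul_assoc]
    rw [hb, mul_assoc _ _ (X n (i + 1)), ← hc.eq]
    simp only [mul_assoc]
  | succ b hib ih =>
    rw [desc_top (by omega)]
    have hc : Commute (X n i) (X n b) := X_comm (by omega) (by omega) (by unfold IsEdge; omega)
    exact SemiconjBy.mul_left hc.symm (ih (by omega))

/-- The shift of `desc_shift` applied to a whole descending product. -/
theorem desc_shift_desc {n a b c : ℕ} (hc : c + 1 ≤ b) (hb : b + 1 ≤ n) :
    SemiconjBy (desc n a b) (desc n (a + 1) (c + 1)) (desc n a c) := by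
  induction c with
  | zero => simp [desc_eq_one]
  | succ c ih =>
    rcases le_or_gt a c with hac | hac
    · rw [desc_top (a := a + 1) (by omega), desc_top hac]
      exact (desc_shift hac hc hb).mul_right (ih (by omega))
    · rw [desc_eq_one (a := a + 1) (by omega), desc_eq_one (a := a) (b := c + 1) (by omega)]
      exact SemiconjBy.one_right _

/-- The leading letter `y` of the `k`-th block. -/
def lead (n k : ℕ) : M n := if k % 2 = 0 then X n (n - 1) else X n (n - 2)

theorem block_eq (n k : ℕ) : block n k = lead n k * desc n k (n - 2) := rfl

theorem lead_add_two (n k : ℕ) : lead n (k + 2) = lead n k := by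
  simp [lead]

theorem lead_cases (n k : ℕ) : (lead n k = X n (n - 1) ∧ lead n (k + 1) = X n (n - 2)) ∨
    (lead n k = X n (n - 2) ∧ lead n (k + 1) = X n (n - 1)) := by
  rcases Nat.mod_two_eq_zero_or_one k with h | h
  · left; simp [lead, h, Nat.add_mod]
  · right; simp [lead, h, Nat.add_mod]

theorem lead_comm {n : ℕ} (hn : 4 ≤ n) (k : ℕ) : Commute (lead n k) (lead n (k + 1)) := by
  have h : Commute (X n (n - 2)) (X n (n - 1)) :=
    X_comm (by omega) (by omega) (by unfold IsEdge; omega)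
  rcases lead_cases n k with ⟨h1, h2⟩ | ⟨h1, h2⟩ <;> rw [h1, h2]
  exacts [h.symm, h]

theorem X_comm_lead {n i : ℕ} (hi : i + 4 ≤ n) (k : ℕ) : Commute (X n i) (lead n k) := by
  rcases lead_cases n k with ⟨h1, -⟩ | ⟨h1, -⟩ <;> rw [h1] <;>
    exact X_comm (by omega) (by omega) (by unfold IsEdge; omega)

theorem X_braid_lead {n : ℕ} (hn : 4 ≤ n) (k : ℕ) :
    X n (n - 3) * lead n k * X n (n - 3) = lead n k * X n (n - 3) * lead n k := by
  rcases lead_cases n k with ⟨h1, -⟩ | ⟨h1, -⟩ <;> rw [h1] <;>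
    exact X_braid (by omega) (by omega) (by unfold IsEdge; omega)

theorem lead_comm_desc {n a b : ℕ} (hb : b + 3 ≤ n) (k : ℕ) :
    Commute (lead n k) (desc n a b) :=
  commute_desc fun m _ _ => (X_comm_lead (by omega) k).symm

theorem block_shift {n k i : ℕ} (hki : k ≤ i) (hi : i + 4 ≤ n) :
    SemiconjBy (block n k) (X n (i + 1)) (X n i) := by
  rw [block_eq]
  exact SemiconjBy.mul_left (X_comm_lead hi k).symm (desc_shift hki (by omega) (by omega))

theorem desc_fork {n k : ℕ} (hn : 4 ≤ n) (hk : k + 3 ≤ n) :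
    desc n k (n - 2) = X n (n - 3) * desc n k (n - 3) := by
  obtain ⟨m, rfl⟩ : ∃ m, n = m + 3 := ⟨n - 3, by omega⟩
  exact desc_top (by omega)

/-- The chain generator next to the fork becomes the leading letter of the block. -/
theorem block_fork {n k : ℕ} (hn : 4 ≤ n) (hk : k + 3 ≤ n) :
    SemiconjBy (block n k) (lead n k) (X n (n - 3)) := by
  have hc : Commute (lead n k) (desc n k (n - 3)) := lead_comm_desc (by omega) k
  rw [block_eq, desc_fork hn hk]
  change lead n k * (X n (n - 3) * desc n k (n - 3)) * lead n k
    = X n (n - 3) * (lead n k * (X n (n - 3) * desc n k (n - 3)))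
  simp only [← mul_assoc]
  rw [X_braid_lead hn, mul_assoc _ _ (lead n k), ← hc.eq]
  simp only [mul_assoc]

/-- Passing through the blocks `k` and `k + 1`, the leading letter of the second one becomes the
chain generator `X k`. -/
theorem two_blocks {n k : ℕ} (hn : 4 ≤ n) (hk : k + 3 ≤ n) :
    SemiconjBy (block n k * block n (k + 1)) (X n k) (lead n (k + 1)) := by
  have hyz := lead_comm hn k
  have hz : Commute (lead n (k + 1)) (desc n k (n - 3)) := lead_comm_desc (by omega) _
  have hbr := X_braid_lead hn (k + 1)
  have hbot : desc n k (n - 2) = desc n (k + 1) (n - 2) * X n k := desc_bot (by omega)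
  have hdd : desc n k (n - 2) * desc n (k + 1) (n - 2) = desc n k (n - 3) * desc n k (n - 2) := by
    have := desc_shift_desc (n := n) (a := k) (b := n - 2) (c := n - 3) (by omega) (by omega)
    rwa [show n - 3 + 1 = n - 2 by omega] at this
  have hf := desc_fork hn hk
  rw [block_eq, block_eq]
  generalize lead n (k + 1) = z at *
  generalize lead n k = y at *
  generalize X n (n - 3) = f at *
  generalize desc n k (n - 3) = d at *
  generalize desc n (k + 1) (n - 2) = D' at *
  generalize desc n k (n - 2) = D at *
  refine Eq.symm (?_ : z * (y * D * (z * D')) = y * D * (z * D') * X n k)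
  calc z * (y * D * (z * D')) = y * z * f * (d * z) * D' := by
        rw [hyz.eq, hf, ← mul_assoc z (y * _), ← mul_assoc z y, ← hyz.eq]; simp only [mul_assoc]
    _ = y * (z * f * z) * d * D' := by rw [← hz.eq]; simp only [mul_assoc]
    _ = y * f * z * (D * D') := by rw [← hbr, hf]; simp only [mul_assoc]
    _ = y * f * (z * d) * D := by rw [hdd]; simp only [mul_assoc]
    _ = y * D * (z * D) := by rw [hz.eq, hf]; simp only [mul_assoc]
    _ = y * D * (z * D') * X n k := by rw [hbot]; simp only [mul_assoc]

theorem block_comm {n j m : ℕ} (hm : j + 2 ≤ m) (hj : j + 4 ≤ n) :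
    Commute (X n j) (block n m) := by
  rw [block_eq]
  exact (X_comm_lead hj m).mul_right (commute_desc fun p _ _ =>
    X_comm (by omega) (by omega) (by unfold IsEdge; omega))

/-- The product of the first `k` blocks. -/
def blocks (n k : ℕ) : M n := ((List.range k).map (block n)).prod

theorem blocks_succ (n k : ℕ) : blocks n (k + 1) = blocks n k * block n k := by
  simp [blocks, List.range_succ]

theorem blocks_shift {n i k : ℕ} (h : i + k + 3 ≤ n) :
    SemiconjBy (blocks n k) (X n (i + k)) (X n i) := by
  induction k with
  | zero => simp [blocks]
  | succ k ih =>
    rw [blocks_succ]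
    exact SemiconjBy.mul_left (ih (by omega))
      (block_shift (i := i + k) (by omega) (by omega))

/-- Passing through the first `j` blocks, `X (n - 2 - j)` climbs to the fork and becomes the letter
to which `two_blocks` applies. -/
theorem blocks_to_lead {n j : ℕ} (hn : 4 ≤ n) (hj : j + 2 ≤ n) :
    SemiconjBy (blocks n j) (lead n (j + 1)) (X n (n - 2 - j)) := by
  cases j with
  | zero => simp [blocks, lead]
  | succ k =>
    rw [blocks_succ, lead_add_two]
    refine SemiconjBy.mul_left ?_ (block_fork hn (by omega))
    have := blocks_shift (n := n) (i := n - 2 - (k + 1)) (k := k) (by omega)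
    rwa [show n - 2 - (k + 1) + k = n - 3 by omega] at this

theorem P_conj {n : ℕ} (hn : 4 ≤ n) (heven : Even n) {j : ℕ} (hj : j + 2 ≤ n) :
    SemiconjBy (P n) (X n j) (X n (n - 2 - j)) := by
  change SemiconjBy (blocks n (n - 1)) _ _
  have h0 := blocks_to_lead hn hj
  rcases hj.lt_or_eq with hlt | heq
  · have key : ∀ m, j + 2 ≤ m → m + 1 ≤ n →
        SemiconjBy (blocks n m) (X n j) (X n (n - 2 - j)) := by
      intro m hm
      induction m, hm using Nat.le_induction with
      | base =>
        intro _
        rw [blocks_succ, blocks_succ, mul_assoc]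
        exact SemiconjBy.mul_left h0 (two_blocks hn (by omega))
      | succ m hm ih =>
        intro h
        rw [blocks_succ]
        exact SemiconjBy.mul_left (ih (by omega)) (block_comm hm (by omega)).symm
    exact key (n - 1) (by omega) (by omega)
  -- For `j = n - 2` a single block is left, and its letter commutes with `lead n (j + 1) = X j`.
  · have hodd : (j + 1) % 2 = 1 := by
      have := Nat.even_iff.1 heven
      omega
    have hl : lead n (j + 1) = X n j := by
      simp [lead, hodd, show n - 2 = j by omega]
    rw [show n - 1 = j + 1 by omega, blocks_succ, block_eq, desc_eq_one (by omega), mul_one]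
    refine SemiconjBy.mul_left h0 ?_
    rw [← hl]
    exact lead_comm hn j

/-! ### The spin action -/

/-- A partial move on sign vectors (`true` for `+`), encoded as functions on `ℕ` whose entries at
positions `≥ n` play no role: if the signs at positions `a, a + 1` are
`(+, c)`, both are reversed; otherwise the move is undefined. -/
def move (a : ℕ) (c : Bool) (v : ℕ → Bool) : Option (ℕ → Bool) :=
  if v a = true ∧ v (a + 1) = c then
    some fun p => if p = a ∨ p = a + 1 then !v p else v p
  else none

theorem move_pos {a : ℕ} {c : Bool} {v : ℕ → Bool} (h1 : v a = true) (h2 : v (a + 1) = c) :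
    move a c v = some fun p => if p = a ∨ p = a + 1 then !v p else v p :=
  if_pos ⟨h1, h2⟩

theorem move_neg {a : ℕ} {c : Bool} {v : ℕ → Bool} (h : v a = true → ¬ v (a + 1) = c) :
    move a c v = none :=
  if_neg fun h' => h h'.1 h'.2

theorem move_cases (a : ℕ) (c : Bool) (v : ℕ → Bool) :
    (v a = true ∧ v (a + 1) = c ∧
      move a c v = some fun p => if p = a ∨ p = a + 1 then !v p else v p) ∨
    ((v a = true → ¬ v (a + 1) = c) ∧ move a c v = none) := by
  by_cases h : v a = true ∧ v (a + 1) = c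
  · exact Or.inl ⟨h.1, h.2, move_pos h.1 h.2⟩
  · have h' : v a = true → ¬ v (a + 1) = c := fun h1 h2 => h ⟨h1, h2⟩
    exact Or.inr ⟨h', move_neg h'⟩

/-- After a move the sign at `a` is `-`, so no second move at `a` is possible. -/
theorem move_move_same (a : ℕ) (c c' : Bool) (v : ℕ → Bool) :
    (move a c v).bind (move a c') = none := by
  rcases move_cases a c v with ⟨h1, -, h⟩ | ⟨-, h⟩ <;> rw [h]
  · rw [Option.bind_some, move_neg (by simp [h1])]
  · rfl

theorem move_comm {a b : ℕ} (hab : a + 2 ≤ b) (c d : Bool) (v : ℕ → Bool) :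
    (move a c v).bind (move b d) = (move b d v).bind (move a c) := by
  have e1 : ¬ (b = a ∨ b = a + 1) := by omega
  have e2 : ¬ (b + 1 = a ∨ b + 1 = a + 1) := by omega
  have e3 : ¬ (a = b ∨ a = b + 1) := by omega
  have e4 : ¬ (a + 1 = b ∨ a + 1 = b + 1) := by omega
  rcases move_cases a c v with ⟨h1, h2, h⟩ | ⟨h1, h⟩ <;>
    rcases move_cases b d v with ⟨k1, k2, k⟩ | ⟨k1, k⟩ <;> rw [h, k]
  · rw [Option.bind_some, Option.bind_some,
      move_pos (by simpa only [if_neg e1] using k1) (by simpa only [if_neg e2] using k2),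
      move_pos (by simpa only [if_neg e3] using h1) (by simpa only [if_neg e4] using h2)]
    congr 1
    funext p
    by_cases hp : p = a ∨ p = a + 1
    · have : ¬ (p = b ∨ p = b + 1) := by omega
      simp only [if_pos hp, if_neg this]
    · simp only [if_neg hp]
  · rw [Option.bind_some, Option.bind_none,
      move_neg (by simpa only [if_neg e1, if_neg e2] using k1)]
  · rw [Option.bind_some, Option.bind_none,
      move_neg (by simpa only [if_neg e3, if_neg e4] using h1)]
  · rfl

theorem move_braid_left (a : ℕ) (c : Bool) (v : ℕ → Bool) :
    ((move a false v).bind (move (a + 1) c)).bind (move a false) = none := by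
  rcases move_cases a false v with ⟨h1, -, h⟩ | ⟨-, h⟩ <;> rw [h]
  · rw [Option.bind_some]
    rcases move_cases (a + 1) c fun p => if p = a ∨ p = a + 1 then !v p else v p with
      ⟨-, -, k⟩ | ⟨-, k⟩ <;> rw [k]
    · rw [Option.bind_some, move_neg (by simp [h1]; omega)]
    · rfl
  · rfl

theorem move_braid_right (a : ℕ) (c : Bool) (v : ℕ → Bool) :
    ((move (a + 1) c v).bind (move a false)).bind (move (a + 1) c) = none := by
  rcases move_cases (a + 1) c v with ⟨-, h2, h⟩ | ⟨-, h⟩ <;> rw [h]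
  · rw [Option.bind_some]
    rcases move_cases a false fun p => if p = a + 1 ∨ p = a + 1 + 1 then !v p else v p with
      ⟨-, -, k⟩ | ⟨-, k⟩ <;> rw [k]
    · rw [Option.bind_some, move_neg (by simp [h2]; omega)]
    · rfl
  · rfl

/-- The partial action of the letter `X i` in the spin representation: the chain letters
turn `(+,-)` at positions `i, i + 1` into `(-,+)`, the branch letter `X (n - 1)` turns `(+,+)` at
positions `n - 2, n - 1` into `(-,-)`. -/
def step (n i : ℕ) : (ℕ → Bool) → Option (ℕ → Bool) :=
  if i + 1 = n then move (n - 2) true else move i false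

theorem step_fork {n : ℕ} (hn : 4 ≤ n) : step n (n - 1) = move (n - 2) true :=
  if_pos (by omega)

theorem step_chain {n i : ℕ} (hi : i + 2 ≤ n) : step n i = move i false :=
  if_neg (by omega)

/-- Every edge `i, j` of the Coxeter graph acts by moves at adjacent positions `i, i + 1`, for the
branch edge too, where `j = n - 1` moves at `n - 2 = i + 1`. -/
theorem step_braid {n : ℕ} (hn : 4 ≤ n) {i j : ℕ} (h : IsEdge n i j) (v : ℕ → Bool) :
    ((step n i v).bind (step n j)).bind (step n i) =
      ((step n j v).bind (step n i)).bind (step n j) := by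
  obtain ⟨c, hc⟩ : ∃ c, step n j = move (i + 1) c := by
    rcases h with ⟨rfl, h⟩ | ⟨h1, h2⟩
    · exact ⟨false, step_chain h⟩
    · exact ⟨true, by rw [show j = n - 1 by omega, step_fork hn, show n - 2 = i + 1 by omega]⟩
  rw [hc, step_chain (i := i) (by unfold IsEdge at h; omega), move_braid_left, move_braid_right]

theorem step_comm {n : ℕ} (hn : 4 ≤ n) {i j : ℕ} (hij : i < j) (hj : j < n)
    (h : ¬ IsEdge n i j) (v : ℕ → Bool) :
    (step n i v).bind (step n j) = (step n j v).bind (step n i) := by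
  unfold IsEdge at h
  rw [step_chain (i := i) (by omega)]
  rcases Nat.lt_or_ge (j + 1) n with hj' | hj'
  · rw [step_chain (i := j) (by omega)]
    exact move_comm (by omega) _ _ _
  · rw [show j = n - 1 by omega, step_fork hn]
    rcases Nat.lt_or_ge (i + 2) n with hi | hi
    · exact move_comm (by omega) _ _ _
    -- The two fork letters move at the same position, so both orders annihilate everything.
    · rw [show i = n - 2 by omega, move_move_same, move_move_same]

/-- A letter as a total map of partial sign vectors, with `none` absorbing. -/
def stepEnd (n i : ℕ) : (Function.End (Option (ℕ → Bool)))ᵐᵒᵖ :=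
  MulOpposite.op fun o => o.bind (step n i)

/-- The right action of the monoid on partial sign vectors, with `none` absorbing. -/
def act {n : ℕ} (hn : 4 ≤ n) : M n →* (Function.End (Option (ℕ → Bool)))ᵐᵒᵖ :=
  PresentedMonoid.lift (fun i : Fin n => stepEnd n i) (by
    rintro _ _ (⟨i, j, h, rfl, rfl⟩ | ⟨i, j, hij, h, rfl, rfl⟩)
    · simp only [map_mul, FreeMonoid.lift_eval_of]
      apply MulOpposite.unop_injective
      funext o
      cases o with
      | none => rfl
      | some v => exact step_braid hn h v
    · simp only [map_mul, FreeMonoid.lift_eval_of]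
      apply MulOpposite.unop_injective
      funext o
      cases o with
      | none => rfl
      | some v => exact step_comm hn hij j.2 h v)

/-- The result of applying a monoid element to a partial sign vector. -/
def run {n : ℕ} (hn : 4 ≤ n) (g : M n) (o : Option (ℕ → Bool)) : Option (ℕ → Bool) :=
  (act hn g).unop o

section run

variable {n : ℕ} (hn : 4 ≤ n)

theorem run_one (o : Option (ℕ → Bool)) : run hn 1 o = o := by
  rw [run, map_one]; rfl

theorem run_mul (g h : M n) (o : Option (ℕ → Bool)) :
    run hn (g * h) o = run hn h (run hn g o) := by
  rw [run, map_mul]; rfl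

theorem run_x (i : Fin n) (o : Option (ℕ → Bool)) : run hn (x i) o = o.bind (step n i) := rfl

theorem run_X {i : ℕ} (hi : i < n) (o : Option (ℕ → Bool)) :
    run hn (X n i) o = o.bind (step n i) := by
  rw [X, dif_pos hi, run_x]

theorem run_none (g : M n) : run hn g none = none := by
  induction g using PresentedMonoid.inductionOn with
  | h w =>
    induction w using FreeMonoid.inductionOn' with
    | one => rw [map_one, run_one]
    | of_mul i w ih =>
      rw [map_mul, run_mul]
      exact ih

/-- A descending product carries a single `-` from position `m` down to position `k`. -/
theorem run_desc {k m : ℕ} (hkm : k ≤ m) (hm : m + 1 ≤ n) {v : ℕ → Bool}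
    (hv : v m = false) (ht : ∀ p, k ≤ p → p < m → v p = true) :
    run hn (desc n k m) (some v) =
      some fun p => if p = k then false else if k < p ∧ p ≤ m then true else v p := by
  induction m, hkm using Nat.le_induction generalizing v with
  | base =>
    rw [desc_eq_one le_rfl, run_one]
    congr 1
    funext p
    grind
  | succ m hkm ih =>
    have hm1 := ht m hkm (by omega)
    rw [desc_top hkm, run_mul, run_X hn (by omega), Option.bind_some,
      step_chain (by omega), move_pos hm1 hv, ih (by omega) (by simp [hm1])]
    · congr 1
      funext p
      grind
    · intro p h1 h2
      have := ht p h1 (by omega)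
      grind

/-- The sign vector reached from the all-plus vector after `k` blocks: a minus at each of the first
`k` positions, and one at the last position when `k` is odd. -/
def signs (n k : ℕ) (p : ℕ) : Bool := decide (k ≤ p ∧ ¬ (p = n - 1 ∧ k % 2 = 1))

theorem run_block {k : ℕ} (hk : k + 2 ≤ n) :
    run hn (block n k) (some (signs n k)) = some (signs n (k + 1)) := by
  have hlead : run hn (lead n k) (some (signs n k)) =
      some fun p => if p = n - 2 ∨ p = n - 1 then !signs n k p else signs n k p := by
    have e : n - 2 + 1 = n - 1 := by omega
    have h1 : signs n k (n - 2) = true := by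
      simp only [signs, decide_eq_true_eq]; omega
    rcases Nat.mod_two_eq_zero_or_one k with h | h
    · have h2 : signs n k (n - 2 + 1) = true := by
        simp only [signs, decide_eq_true_eq]; omega
      rw [lead, if_pos h, run_X hn (by omega), Option.bind_some, step_fork hn, move_pos h1 h2, e]
    · have h2 : signs n k (n - 2 + 1) = false := by
        simp only [signs, decide_eq_false_iff_not]; omega
      rw [lead, if_neg (by omega), run_X hn (by omega), Option.bind_some,
        step_chain (by omega), move_pos h1 h2, e]
  rw [block_eq, run_mul, hlead, run_desc hn (by omega) (by omega)]
  · congr 1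
    funext p
    simp only [signs]
    grind
  · simp [signs]; omega
  · intro p h1 h2
    simp only [signs]
    grind

theorem run_blocks {k : ℕ} (hk : k + 1 ≤ n) :
    run hn (blocks n k) (some fun _ => true) = some (signs n k) := by
  induction k with
  | zero =>
    simp only [blocks, List.range_zero, List.map_nil, List.prod_nil, run_one]
    congr 1
    funext p
    simp [signs]
  | succ k ih => rw [blocks_succ, run_mul, ih (by omega), run_block hn (by omega)]

/-- No factor of `P n` annihilates the whole spin representation, because `P n` itself moves
the all-plus vector. -/
theorem not_dvd2_P {g : M n} (hg : ∀ v, run hn g (some v) = none) : ¬ Dvd2 g (P n) := by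
  rintro ⟨l, r, h⟩
  have hP : run hn (P n) (some fun _ => true) = some (signs n (n - 1)) :=
    run_blocks hn (by omega)
  rw [h, run_mul, run_mul] at hP
  have : run hn g (run hn l (some fun _ => true)) = none := by
    cases run hn l (some fun _ => true) with
    | none => exact run_none hn g
    | some v => exact hg v
  rw [this, run_none] at hP
  cases hP

end run

/-- In type `Dₙ` (`n ≥ 4` even), for `Pₙ = ∏_{k=1}^{n−1} (y_k x_{n−2}x_{n−3}⋯x_k)`:
(a) `Pₙ` is square free and `xₙx_{n−1}` does not divide `Pₙ`; (b) `xᵢ` left-divides `Pₙ`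
iff `i = n`; (c) `xᵢPₙ = Pₙx_{n−i}` for `1 ≤ i ≤ n−1`. -/
theorem statement11 (n : ℕ) (hn : 4 ≤ n) (heven : Even n) :
    ((∀ i : Fin n, ¬ Dvd2 (x i * x i) (P n)) ∧ ¬ Dvd2 (X n (n - 1) * X n (n - 2)) (P n)) ∧
    (∀ i : Fin n, (LeftDvd (x i) (P n) ↔ (i : ℕ) + 1 = n)) ∧
    (∀ i j : Fin n, (i : ℕ) + (j : ℕ) + 2 = n → x i * P n = P n * x j) := by
  refine ⟨⟨fun i => not_dvd2_P hn fun v => ?_, not_dvd2_P hn fun v => ?_⟩, fun i => ⟨?_, ?_⟩, ?_⟩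
  · rw [run_mul, run_x, run_x, Option.bind_some]
    unfold step
    split_ifs <;> exact move_move_same _ _ _ _
  · rw [run_mul, run_X hn (by omega), run_X hn (by omega), Option.bind_some, step_fork hn,
      step_chain (by omega), move_move_same]
  · rintro ⟨c, hc⟩
    by_contra hi
    have hP : run hn (P n) (some fun _ => true) = some (signs n (n - 1)) :=
      run_blocks hn (by omega)
    rw [hc, run_mul, run_x, Option.bind_some, step_chain (by omega), move_neg (by simp),
      run_none] at hP
    cases hP
  · intro hi
    have hx : X n (n - 1) = x i := by
      rw [X, dif_pos (by omega)]
      congr 1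
      exact Fin.ext (by simp only; omega)
    obtain ⟨m, hm⟩ : ∃ m, n - 1 = m + 1 := ⟨n - 2, by omega⟩
    refine ⟨desc n 0 (n - 2) * ((List.range m).map fun k => block n (k + 1)).prod, ?_⟩
    rw [P, hm, List.range_succ_eq_map, List.map_cons, List.prod_cons, List.map_map, block_eq,
      lead, if_pos rfl, hx, mul_assoc]
    rfl
  · intro i j hij
    have h := (P_conj hn heven (j := j) (by omega)).eq
    rw [show n - 2 - (j : ℕ) = i by omega, X, X, dif_pos i.2, dif_pos j.2] at h
    exact h.symm

end ArtinD
end
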